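/- (Summability of the weighted modified Bessel series, used in the proof of Lemma 7.6.) For every ν > 0 and every C > 0, the series ∑_{n=1}^∞ n² I_{nν}(C) converges, where for μ > 0 and z > 0, I_μ(z) := (z/2)^μ ∑_{k=0}^∞ (z²/4)^k / (k! Γ(μ + k + 1)) is the modified Bessel function of the first kind of order μ, and Γ is Euler's Gamma function. -/

import Mathlib

open Real

/-- The modified Bessel function of the first kind of order `μ`:
`I_μ(z) = (z/2)^μ ∑_{k=0}^∞ (z²/4)^k / (k! Γ(μ + k + 1))`. -/
noncomputable def besselI (μ z : ℝ) : ℝ :=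
  (z / 2) ^ μ * ∑' k : ℕ, (z ^ 2 / 4) ^ k / ((Nat.factorial k : ℝ) * Real.Gamma (μ + k + 1))

lemma Gamma_lower_aux (A s : ℝ) (hA : 0 < A) (hs : 0 ≤ s) :
    A ^ s * Real.exp (-A) ≤ Real.Gamma (s + 1) := by
  have hint := Real.GammaIntegral_convergent (s := s + 1) (by linarith)
  rw [Real.Gamma_eq_integral (by linarith)]
  have hsub : Set.Ioi A ⊆ Set.Ioi 0 := Set.Ioi_subset_Ioi hA.le
  calc A ^ s * Real.exp (-A) = ∫ x in Set.Ioi A, A ^ s * Real.exp (-x) := by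
        rw [MeasureTheory.integral_const_mul, integral_exp_neg_Ioi]
    _ ≤ ∫ x in Set.Ioi A, Real.exp (-x) * x ^ (s + 1 - 1) := by
        refine MeasureTheory.setIntegral_mono_on ?_ (hint.mono_set hsub) measurableSet_Ioi ?_
        · exact (integrableOn_exp_neg_Ioi A).const_mul _
        · intro x hx
          rw [mul_comm, add_sub_cancel_right]
          have : A ^ s ≤ x ^ s := Real.rpow_le_rpow hA.le (le_of_lt hx) hs
          gcongr
    _ ≤ _ := by
        refine MeasureTheory.setIntegral_mono_set hint ?_ (Filter.Eventually.of_forall hsub)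
        refine (MeasureTheory.ae_restrict_mem measurableSet_Ioi).mono ?_
        intro x hx
        have : (0 : ℝ) < x := hx
        simp only [Pi.zero_apply]
        positivity

/-- Pointwise bound on `besselI`. -/
lemma besselI_bound_aux (A C μ : ℝ) (hA : 1 ≤ A) (hC : 0 < C) (hμ : 0 ≤ μ) :
    0 ≤ besselI μ C ∧
      besselI μ C ≤ (C / 2 / A) ^ μ * (Real.exp A * Real.exp (C ^ 2 / 4)) := by
  have hA0 : 0 < A := by linarith
  have hG : ∀ k : ℕ, A ^ μ * Real.exp (-A) ≤ Real.Gamma (μ + k + 1) := by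
    intro k
    have hk : (0 : ℝ) ≤ k := Nat.cast_nonneg k
    refine le_trans ?_ (Gamma_lower_aux A (μ + k) hA0 (by linarith))
    have : A ^ μ ≤ A ^ (μ + k) := Real.rpow_le_rpow_of_exponent_le hA (by linarith)
    gcongr
  have hG0 : 0 < A ^ μ * Real.exp (-A) := by positivity
  have hterm0 : ∀ k : ℕ,
      0 ≤ (C ^ 2 / 4) ^ k / ((Nat.factorial k : ℝ) * Real.Gamma (μ + k + 1)) := by
    intro k
    have := hG0.trans_le (hG k)
    positivity
  have hexp : HasSum (fun k : ℕ => (C ^ 2 / 4) ^ k / (Nat.factorial k : ℝ))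
      (Real.exp (C ^ 2 / 4)) := by
    rw [Real.exp_eq_exp_ℝ]
    exact NormedSpace.expSeries_div_hasSum_exp (C ^ 2 / 4)
  have hb := hexp.div_const (A ^ μ * Real.exp (-A))
  have hle : ∀ k : ℕ, (C ^ 2 / 4) ^ k / ((Nat.factorial k : ℝ) * Real.Gamma (μ + k + 1)) ≤
      (C ^ 2 / 4) ^ k / (Nat.factorial k : ℝ) / (A ^ μ * Real.exp (-A)) := by
    intro k
    rw [← div_div]
    have := hG k
    gcongr
  have hsum := Summable.of_nonneg_of_le hterm0 hle hb.summable
  unfold besselI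
  constructor
  · exact mul_nonneg (by positivity) (tsum_nonneg hterm0)
  · have h := hsum.tsum_le_tsum hle hb.summable
    rw [hb.tsum_eq] at h
    refine (mul_le_mul_of_nonneg_left h (by positivity)).trans (le_of_eq ?_)
    rw [Real.div_rpow (by positivity) hA0.le, Real.exp_neg]
    field_simp

/-- Summability of the weighted modified Bessel series (used in the proof of Lemma 7.6):
for every `ν > 0` and `C > 0`, the series `∑_{n≥1} n² I_{nν}(C)` converges. -/
theorem summable_weighted_besselI (ν C : ℝ) (hν : 0 < ν) (hC : 0 < C) :
    Summable (fun n : ℕ => (n : ℝ) ^ 2 * besselI ((n : ℝ) * ν) C) := by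
  have hq0 : 0 < C / 2 / (C + 1) := by positivity
  have hq1 : C / 2 / (C + 1) < 1 := by
    rw [div_lt_one (by linarith)]; linarith
  have hr1 : (C / 2 / (C + 1)) ^ ν < 1 := Real.rpow_lt_one hq0.le hq1 hν
  have hr0 : 0 ≤ (C / 2 / (C + 1)) ^ ν := by positivity
  have hs := (summable_pow_mul_geometric_of_norm_lt_one 2
    (r := (C / 2 / (C + 1)) ^ ν) (by rwa [Real.norm_of_nonneg hr0])).mul_right
    (Real.exp (C + 1) * Real.exp (C ^ 2 / 4))
  have hB := fun n : ℕ => besselI_bound_aux (C + 1) C ((n : ℝ) * ν) (by linarith) hC (by positivity)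
  refine Summable.of_nonneg_of_le (fun n => mul_nonneg (by positivity) (hB n).1) (fun n => ?_) hs
  rw [mul_assoc]
  refine mul_le_mul_of_nonneg_left ((hB n).2.trans (le_of_eq ?_)) (by positivity)
  rw [mul_comm (n : ℝ) ν, Real.rpow_mul hq0.le, Real.rpow_natCast]
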